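/- For p = 3, the number of primitive periodic orbits satisfies PO_3(n) = L_2(n) for all n ≠ 2 and PO_3(2) = L_2(2) + 1, where PO_3(n) is defined by Tr(A_V^n) = ∑_{d|n} d·PO_3(d) for the binary-graph adjacency matrix with V = 3·2^r, and L_2(n) is the number of binary Lyndon words of length n. Consequently C_3 = 1 + 2^{−2} = 5/4. -/

import Mathlib

open Matrix Finset

/-- A Lyndon word: a nonempty word strictly lexicographically smaller than
all of its nontrivial cyclic rotations. -/
def IsLyndon {α : Type*} [LinearOrder α] (w : List α) : Prop :=
  w ≠ [] ∧ ∀ i, 0 < i → i < w.length → w < w.rotate i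

/-- The number of binary Lyndon words of length `n`. -/
noncomputable def L2 (n : ℕ) : ℕ :=
  Nat.card {w : List Bool // w.length = n ∧ IsLyndon w}

/-- Adjacency matrix of the binary graph on `V` vertices. -/
def binAdj (V : ℕ) : Matrix (Fin V) (Fin V) ℕ := fun i j =>
  (if (2 * i.val) % V = j.val then 1 else 0) +
    (if (2 * i.val + 1) % V = j.val then 1 else 0)

section Orbits

open Function

/-- Each orbit of exact period `n` contains exactly one point minimizing `f`. -/
theorem ncard_minimalPeriod_eq {X L : Type*} [LinearOrder L] (T : X → X) (f : X → L) {n : ℕ}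
    (hn : 0 < n) (hf : Set.InjOn f {x | minimalPeriod T x = n}) :
    {x | minimalPeriod T x = n}.ncard =
      n * {x | minimalPeriod T x = n ∧ ∀ i, 0 < i → i < n → f x < f (T^[i] x)}.ncard := by
  set S := {x | minimalPeriod T x = n ∧ ∀ i, 0 < i → i < n → f x < f (T^[i] x)}
  have hper {x : X} (hx : minimalPeriod T x = n) (i : ℕ) : minimalPeriod T (T^[i] x) = n := by
    rw [minimalPeriod_apply_iterate _ i, hx]
    exact minimalPeriod_pos_iff_mem_periodicPts.1 (hx ▸ hn)
  have hmod {x : X} (hx : minimalPeriod T x = n) (i : ℕ) : T^[i % n] x = T^[i] x := by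
    rw [← hx]; exact iterate_mod_minimalPeriod_eq
  have hback {x : X} (hx : minimalPeriod T x = n) {i : ℕ} (hi : i < n) :
      T^[n - i] (T^[i] x) = x := by
    rw [← iterate_add_apply, Nat.sub_add_cancel hi.le, ← hx, iterate_minimalPeriod]
  have hle {x : X} (hx : x ∈ S) (i : ℕ) : f x ≤ f (T^[i] x) := by
    rw [← hmod hx.1]
    rcases Nat.eq_zero_or_pos (i % n) with h | h
    · simp [h]
    · exact (hx.2 _ h (Nat.mod_lt _ hn)).le
  have himage : {x | minimalPeriod T x = n} =
      (fun q : X × ℕ => T^[q.2] q.1) '' (S ×ˢ Set.Iio n) := by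
    ext y
    constructor
    · intro hy
      have hy : minimalPeriod T y = n := hy
      obtain ⟨j, hj, hmin⟩ := Finset.exists_min_image (Finset.range n) (fun j => f (T^[j] y))
        ⟨0, by simpa using hn⟩
      rw [Finset.mem_range] at hj
      refine ⟨(T^[j] y, (n - j) % n), ⟨⟨hper hy j, fun i hi hin => ?_⟩, Nat.mod_lt _ hn⟩, ?_⟩
      · refine lt_of_le_of_ne ?_ fun h => ?_
        · rw [← iterate_add_apply, ← hmod hy (i + j)]
          exact hmin _ (Finset.mem_range.2 (Nat.mod_lt _ hn))
        · have h' := hf (hper hy j) (hper (hper hy j) i) h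
          have := IsPeriodicPt.minimalPeriod_le hi h'.symm
          rw [hper hy j] at this
          omega
      · simp only [hmod (hper hy j), hback hy hj]
    · rintro ⟨⟨x, j⟩, ⟨hx, -⟩, rfl⟩
      exact hper hx.1 j
  have hinj : Set.InjOn (fun q : X × ℕ => T^[q.2] q.1) (S ×ˢ Set.Iio n) := by
    rintro ⟨x, j⟩ ⟨hx, hj⟩ ⟨y, k⟩ ⟨hy, hk⟩ h
    simp only [Set.mem_Iio] at hx hj hy hk h
    have hxy : x = y := by
      refine hf hx.1 hy.1 (le_antisymm ?_ ?_)
      · rw [← hback hy.1 hk, ← h, ← iterate_add_apply]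
        exact hle hx _
      · rw [← hback hx.1 hj, h, ← iterate_add_apply]
        exact hle hy _
    subst hxy
    rw [Prod.mk.injEq]
    exact ⟨rfl, (iterate_eq_iterate_iff_of_lt_minimalPeriod (hx.1.symm ▸ hj)
      (hx.1.symm ▸ hk)).1 h⟩
  rw [himage, hinj.ncard_image, Set.ncard_prod, mul_comm]
  congr 1
  rw [← Finset.coe_Iio, Set.ncard_coe_finset, Nat.card_Iio]

theorem ncard_isPeriodicPt_eq_sum {X : Type*} (T : X → X) {n : ℕ} (hn : 0 < n)
    (hfin : {x | IsPeriodicPt T n x}.Finite) :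
    {x | IsPeriodicPt T n x}.ncard = ∑ d ∈ n.divisors, {x | minimalPeriod T x = d}.ncard := by
  classical
  rw [Set.ncard_eq_toFinset_card _ hfin,
    Finset.card_eq_sum_card_fiberwise (f := minimalPeriod T) (t := n.divisors)]
  · refine Finset.sum_congr rfl fun d hd => ?_
    rw [← Set.ncard_coe_finset]
    congr 1
    ext x
    simp only [Finset.coe_filter, Set.Finite.mem_toFinset, Set.mem_ofPred_eq,
      and_iff_right_iff_imp]
    rintro rfl
    exact isPeriodicPt_iff_minimalPeriod_dvd.2 (Nat.dvd_of_mem_divisors hd)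
  · intro x hx
    simp only [Set.Finite.coe_toFinset, Set.mem_ofPred_eq] at hx
    simpa [hn.ne'] using hx.minimalPeriod_dvd

end Orbits

section Words

open Function

variable {α : Type*}

/-- The left shift on one-sided sequences. -/
def shift (x : ℕ → α) : ℕ → α := fun k => x (k + 1)

/-- The prefix of length `n` of a sequence. -/
def initialWord (n : ℕ) (x : ℕ → α) : List α := (List.range n).map x

theorem iterate_shift_apply (x : ℕ → α) (i k : ℕ) : shift^[i] x k = x (k + i) := by
  induction i generalizing x with
  | zero => rfl
  | succ i ih => rw [iterate_succ_apply, ih, shift, add_assoc]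

theorem isPeriodicPt_shift {x : ℕ → α} {n : ℕ} : IsPeriodicPt shift n x ↔ Periodic x n := by
  simp only [IsPeriodicPt, IsFixedPt, funext_iff, iterate_shift_apply, Periodic]

@[simp]
theorem length_initialWord (n : ℕ) (x : ℕ → α) : (initialWord n x).length = n := by
  simp [initialWord]

theorem rotate_initialWord {x : ℕ → α} {n : ℕ} (hx : Periodic x n) (i : ℕ) :
    (initialWord n x).rotate i = initialWord n (shift^[i] x) := by
  refine List.ext_getElem (by simp) fun k h₁ h₂ => ?_
  rw [List.getElem_rotate]
  simp [initialWord, iterate_shift_apply, hx.map_mod_nat]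

theorem injOn_initialWord {n : ℕ} (hn : 0 < n) :
    Set.InjOn (initialWord n) {x : ℕ → α | IsPeriodicPt shift n x} := by
  intro x hx y hy h
  have hx := isPeriodicPt_shift.1 hx
  have hy := isPeriodicPt_shift.1 hy
  ext k
  rw [← hx.map_mod_nat, ← hy.map_mod_nat]
  exact List.map_inj_left.1 h _ (List.mem_range.2 (Nat.mod_lt _ hn))

theorem injOn_initialWord_minimalPeriod {n : ℕ} (hn : 0 < n) :
    Set.InjOn (initialWord n) {x : ℕ → α | minimalPeriod shift x = n} :=
  (injOn_initialWord hn).mono fun x hx => by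
    rw [Set.mem_ofPred_eq] at hx ⊢
    exact hx ▸ isPeriodicPt_minimalPeriod shift x

theorem exists_isPeriodicPt_initialWord_eq {n : ℕ} (hn : 0 < n) {w : List α} (hw : w.length = n) :
    ∃ x, IsPeriodicPt shift n x ∧ initialWord n x = w := by
  refine ⟨fun k => w[k % n]'((Nat.mod_lt _ hn).trans_eq hw.symm),
    isPeriodicPt_shift.2 fun k => by simp, ?_⟩
  refine List.ext_getElem (by simp [hw]) fun k h₁ h₂ => ?_
  simp [initialWord, Nat.mod_eq_of_lt (h₂.trans_eq hw)]

theorem image_initialWord_isPeriodicPt {n : ℕ} (hn : 0 < n) :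
    initialWord n '' {x : ℕ → α | IsPeriodicPt shift n x} = {w | w.length = n} := by
  ext w
  constructor
  · rintro ⟨x, -, rfl⟩
    exact length_initialWord n x
  · exact exists_isPeriodicPt_initialWord_eq hn

theorem image_initialWord_isLyndon [LinearOrder α] {n : ℕ} (hn : 0 < n) :
    initialWord n '' {x : ℕ → α | minimalPeriod shift x = n ∧
      ∀ i, 0 < i → i < n → initialWord n x < initialWord n (shift^[i] x)} =
    {w | w.length = n ∧ IsLyndon w} := by
  ext w
  constructor
  · rintro ⟨x, ⟨hx, hlt⟩, rfl⟩
    have hper : Periodic x n := isPeriodicPt_shift.1 (hx ▸ isPeriodicPt_minimalPeriod shift x)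
    refine ⟨length_initialWord n x, ?_, fun i hi hin => ?_⟩
    · rw [← List.length_pos_iff, length_initialWord]
      exact hn
    · rw [rotate_initialWord hper]
      exact hlt i hi (by simpa using hin)
  · rintro ⟨hw, -, hlt⟩
    obtain ⟨x, hx, rfl⟩ := exists_isPeriodicPt_initialWord_eq hn hw
    rw [length_initialWord] at hlt
    have hlt' : ∀ i, 0 < i → i < n → initialWord n x < initialWord n (shift^[i] x) :=
      fun i hi hin => rotate_initialWord (isPeriodicPt_shift.1 hx) i ▸ hlt i hi hin
    refine ⟨x, ⟨(hx.minimalPeriod_le hn).antisymm (le_of_not_gt fun h => ?_), hlt'⟩, rfl⟩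
    have := hlt' _ (hx.minimalPeriod_pos hn) h
    rw [iterate_minimalPeriod] at this
    exact lt_irrefl _ this

end Words

/-- Every binary word is uniquely a rotation of a power of a Lyndon word. -/
theorem sum_divisors_mul_L2 {n : ℕ} (hn : 0 < n) : ∑ d ∈ n.divisors, d * L2 d = 2 ^ n := by
  have hL (d : ℕ) (hd : 0 < d) :
      d * L2 d = {x : ℕ → Bool | Function.minimalPeriod shift x = d}.ncard := by
    rw [ncard_minimalPeriod_eq shift (initialWord d) hd (injOn_initialWord_minimalPeriod hd),
      ← ((injOn_initialWord_minimalPeriod hd).mono fun x hx => hx.1).ncard_image,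
      image_initialWord_isLyndon hd]
    rfl
  have hcard : {w : List Bool | w.length = n}.ncard = 2 ^ n := by
    change Nat.card (List.Vector Bool n) = _
    simp
  have hfin : {x : ℕ → Bool | Function.IsPeriodicPt shift n x}.Finite := by
    refine Set.Finite.of_finite_image ?_ (injOn_initialWord hn)
    rw [image_initialWord_isPeriodicPt hn]
    exact Set.finite_of_ncard_pos (hcard ▸ by positivity)
  rw [Finset.sum_congr rfl fun d hd => hL d (Nat.pos_of_mem_divisors hd),
    ← ncard_isPeriodicPt_eq_sum shift hn hfin, ← (injOn_initialWord hn).ncard_image,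
    image_initialWord_isPeriodicPt hn, hcard]

theorem sum_range_two_mul {M : Type*} [AddCommMonoid M] (f : ℕ → M) (n : ℕ) :
    ∑ k ∈ Finset.range (2 * n), f k = ∑ k ∈ Finset.range n, (f (2 * k) + f (2 * k + 1)) := by
  induction n with
  | zero => simp
  | succ n ih =>
    rw [Nat.mul_succ, Finset.sum_range_succ, Finset.sum_range_succ, Finset.sum_range_succ, ih,
      add_assoc]

theorem binAdj_pow_apply {V : ℕ} (n : ℕ) (i j : Fin V) :
    (binAdj V ^ n) i j =
      ∑ k ∈ Finset.range (2 ^ n), if (2 ^ n * i.val + k) % V = j.val then 1 else 0 := by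
  have hV : 0 < V := i.pos
  induction n generalizing j with
  | zero => simp [Matrix.one_apply, -Finset.sum_boole, Nat.mod_eq_of_lt i.isLt, Fin.ext_iff]
  | succ n ih =>
    rw [pow_succ, Matrix.mul_apply, pow_succ' 2, sum_range_two_mul]
    simp only [ih, Finset.sum_mul]
    rw [Finset.sum_comm]
    refine Finset.sum_congr rfl fun k _ => ?_
    rw [Finset.sum_eq_single ⟨(2 ^ n * i.val + k) % V, Nat.mod_lt _ hV⟩]
    · have h (e : ℕ) : (2 * ((2 ^ n * i.val + k) % V) + e) % V =
          (2 * 2 ^ n * i.val + (2 * k + e)) % V := by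
        rw [Nat.add_mod, Nat.mul_mod_mod, ← Nat.add_mod]
        congr 1
        ring
      have h₀ := h 0
      have h₁ := h 1
      simp only [add_zero] at h₀
      simp only [binAdj, if_true, one_mul, h₀, h₁]
    · intro m _ hm
      rw [if_neg, zero_mul]
      exact fun h => hm (Fin.ext h.symm)
    · simp

theorem card_filter_dvd_mul_add {M N c : ℕ} (hM : 0 < M) (hMN : M ∣ N) (hc : c.Coprime M)
    (k : ℕ) : #{i ∈ Finset.range N | M ∣ c * i + k} = N / M := by
  have : NeZero M := ⟨hM.ne'⟩
  have hinv := ZMod.coe_mul_inv_eq_one c hc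
  have hiff (i : ℕ) : M ∣ c * i + k ↔ i ≡ (-(k : ZMod M) * (c : ZMod M)⁻¹).val [MOD M] := by
    rw [← ZMod.natCast_eq_zero_iff, ← ZMod.natCast_eq_natCast_iff, ZMod.natCast_zmod_val]
    push_cast
    constructor
    · intro h
      linear_combination (c : ZMod M)⁻¹ * h - i * hinv
    · intro h
      rw [h]
      linear_combination (-k : ZMod M) * hinv
  simp only [hiff]
  rw [← Nat.count_eq_card_filter_range, Nat.count_modEq_card _ hM, Nat.mod_eq_zero_of_dvd hMN]
  simp

theorem trace_binAdj_pow (V n : ℕ) :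
    Matrix.trace (binAdj V ^ n) =
      ∑ k ∈ Finset.range (2 ^ n), #{i ∈ Finset.range V | V ∣ (2 ^ n - 1) * i + k} := by
  simp only [Matrix.trace, Matrix.diag_apply, binAdj_pow_apply, Finset.card_filter]
  rw [Finset.sum_comm]
  refine Finset.sum_congr rfl fun k _ => ?_
  rw [← Fin.sum_univ_eq_sum_range (fun i => if V ∣ (2 ^ n - 1) * i + k then 1 else 0)]
  refine Finset.sum_congr rfl fun i _ => if_congr ?_ rfl rfl
  have h : 2 ^ n * i.val + k = ((2 ^ n - 1) * i + k) + i := by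
    have := Nat.one_le_two_pow (n := n)
    zify [this]
    ring
  rw [h, Nat.dvd_iff_mod_eq_zero]
  constructor
  · intro h'
    have : (2 ^ n - 1) * i + k + i ≡ 0 + i [MOD V] := by
      rw [Nat.ModEq, h', zero_add, Nat.mod_eq_of_lt i.isLt]
    exact this.add_right_cancel'
  · intro h'
    rw [Nat.add_mod, h', zero_add, Nat.mod_mod, Nat.mod_eq_of_lt i.isLt]

theorem trace_binAdj_three_mul_two_pow (r : ℕ) {n : ℕ} (hn : 0 < n) :
    Matrix.trace (binAdj (3 * 2 ^ r) ^ n) = 2 ^ n + if 2 ∣ n then 2 else 0 := by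
  rw [trace_binAdj_pow]
  have hodd : (2 ^ n - 1).Coprime (2 ^ r) := by
    refine Nat.Coprime.pow_right _ (Nat.coprime_two_right.2 ?_)
    exact Nat.Even.sub_odd Nat.one_le_two_pow ((even_two).pow_of_ne_zero hn.ne') odd_one
  split_ifs with h2
  · obtain ⟨b, hb⟩ : 3 ∣ 2 ^ n - 1 := by
      obtain ⟨m, rfl⟩ := h2
      rw [pow_mul]
      simpa using Nat.sub_dvd_pow_sub_pow 4 1 m
    have hb' : b.Coprime (2 ^ r) := hodd.coprime_dvd_left ⟨3, by rw [hb, mul_comm]⟩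
    have hcount (k : ℕ) : #{i ∈ Finset.range (3 * 2 ^ r) | 3 * 2 ^ r ∣ (2 ^ n - 1) * i + k} =
        if k ≡ 0 [MOD 3] then 3 else 0 := by
      split_ifs with hk
      · obtain ⟨m, rfl⟩ := (Nat.modEq_zero_iff_dvd).1 hk
        have h (i : ℕ) : 3 * 2 ^ r ∣ (2 ^ n - 1) * i + 3 * m ↔ 2 ^ r ∣ b * i + m := by
          rw [hb, mul_assoc, ← mul_add, Nat.mul_dvd_mul_iff_left three_pos]
        simp only [h]
        rw [card_filter_dvd_mul_add (by positivity) (Dvd.intro_left _ rfl) hb',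
          Nat.mul_div_cancel _ (by positivity)]
      · rw [Finset.card_eq_zero, Finset.filter_eq_empty_iff]
        intro i _ hi
        refine hk (Nat.modEq_zero_iff_dvd.2 ?_)
        refine (Nat.dvd_add_right ?_).1 ((Dvd.intro _ rfl).trans hi)
        exact Dvd.dvd.mul_right ⟨b, hb⟩ i
    simp only [hcount]
    rw [← Finset.sum_filter, Finset.sum_const, ← Nat.count_eq_card_filter_range,
      Nat.count_modEq_card _ three_pos, smul_eq_mul]
    have := Nat.one_le_two_pow (n := n)
    rw [if_pos (by omega)]
    omega
  · have h3 : (2 ^ n - 1).Coprime 3 := by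
      rw [Nat.coprime_comm, Nat.Prime.coprime_iff_not_dvd Nat.prime_three]
      obtain ⟨m, rfl⟩ := Nat.not_even_iff_odd.1 (even_iff_two_dvd.not.2 h2)
      have : 4 ^ m % 3 = 1 := by simp [Nat.pow_mod]
      rw [pow_succ, pow_mul]
      norm_num
      omega
    simp only [card_filter_dvd_mul_add (M := 3 * 2 ^ r) (by positivity) dvd_rfl (h3.mul_right hodd)]
    rw [Nat.div_self (by positivity)]
    simp

theorem eq_of_sum_divisors_eq {M : Type*} [AddCancelCommMonoid M] {F G : ℕ → M}
    (h : ∀ n, 0 < n → ∑ d ∈ n.divisors, F d = ∑ d ∈ n.divisors, G d) {n : ℕ} (hn : 0 < n) :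
    F n = G n := by
  induction n using Nat.strong_induction_on with
  | _ n ih =>
    have hn' := h n hn
    rw [← Nat.insert_self_properDivisors hn.ne',
      Finset.sum_insert Nat.self_notMem_properDivisors,
      Finset.sum_insert Nat.self_notMem_properDivisors,
      Finset.sum_congr rfl fun d hd => ih d (Nat.mem_properDivisors.1 hd).2
        (Nat.pos_of_mem_properDivisors hd)] at hn'
    exact add_right_cancel hn'

/-- For `p = 3`: if `PO` is defined by `Tr(A_V^n) = ∑_{d ∣ n} d·PO(d)` with
`V = 3·2^r`, then `PO(n) = L₂(n)` for `n ≠ 2` and `PO(2) = L₂(2) + 1`;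
consequently `C₃ = 1 + 2^{−2} = 5/4`. -/
theorem p_eq_three_orbit_count (r : ℕ) (PO : ℕ → ℕ)
    (hPO : ∀ n, 1 ≤ n →
      Matrix.trace ((binAdj (3 * 2 ^ r)) ^ n) = ∑ d ∈ n.divisors, d * PO d) :
    (∀ n, 1 ≤ n → n ≠ 2 → PO n = L2 n) ∧
      PO 2 = L2 2 + 1 ∧
      (1 + ((2 : ℚ) ^ 2)⁻¹ = 5 / 4) := by
  have key (n : ℕ) (hn : 0 < n) : PO n = L2 n + if n = 2 then 1 else 0 := by
    refine Nat.eq_of_mul_eq_mul_left hn (eq_of_sum_divisors_eq (F := fun d => d * PO d)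
      (G := fun d => d * (L2 d + if d = 2 then 1 else 0)) (fun m hm => ?_) hn)
    rw [← hPO m hm, trace_binAdj_three_mul_two_pow r hm]
    simp [mul_add, Finset.sum_add_distrib, sum_divisors_mul_L2 hm, hm.ne']
  refine ⟨fun n hn h => by simpa [h] using key n hn, by simpa using key 2 two_pos, by norm_num⟩
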